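/- Let (E₁, F₁) and (E₂, F₂) be adjoint pairs of linear operators on V, and let v ∈ V and real numbers n, m satisfy: E₁ v = 0, E₂ v = 0, E₂∘F₁ = F₁∘E₂, (E₁∘F₁ − F₁∘E₁) v = n • v, and (E₂∘F₂ − F₂∘E₂)(F₁ v) = m • (F₁ v). Then ‖F₂(F₁ v)‖² = m·n·‖v‖². -/

import Mathlib

open scoped InnerProductSpace

/-!
For an adjoint pair, `‖F w‖² = ⟪w, E (F w)⟫`, and on a vector killed by `E` the operator `E ∘ F`
agrees with the commutator of `E` and `F`. Hence lowering such a commutator eigenvector multiplies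
its squared norm by the eigenvalue. Since `E₂` commutes with `F₁`, it kills `F₁ v` as well as `v`,
so this applies first to `v` and then to `F₁ v`.
-/

theorem comp_sub_comp_apply_of_apply_eq_zero {R M : Type*} [Semiring R] [AddCommGroup M]
    [Module R M] (E F : M →ₗ[R] M) {w : M} (hw : E w = 0) :
    (E ∘ₗ F - F ∘ₗ E) w = E (F w) := by
  rw [LinearMap.sub_apply, LinearMap.comp_apply, LinearMap.comp_apply, hw, map_zero, sub_zero]

section AdjointPair

variable {𝕜 V : Type*} [RCLike 𝕜] [SeminormedAddCommGroup V] [InnerProductSpace 𝕜 V]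

theorem norm_sq_apply_of_adjoint_apply_eq_smul {W : Type*} [SeminormedAddCommGroup W]
    [InnerProductSpace 𝕜 W] {E : W → V} {F : V → W} (hadj : ∀ x y, ⟪E x, y⟫_𝕜 = ⟪x, F y⟫_𝕜)
    {w : V} {c : 𝕜} (hc : E (F w) = c • w) :
    (‖F w‖ : 𝕜) ^ 2 = c * (‖w‖ : 𝕜) ^ 2 :=
  calc (‖F w‖ : 𝕜) ^ 2 = ⟪F w, F w⟫_𝕜 := (inner_self_eq_norm_sq_to_K _).symm
    _ = ⟪w, E (F w)⟫_𝕜 := by rw [← inner_conj_symm (F w) (F w), ← hadj, inner_conj_symm]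
    _ = c * (‖w‖ : 𝕜) ^ 2 := by rw [hc, inner_smul_right, inner_self_eq_norm_sq_to_K]

theorem norm_sq_apply_of_comp_sub_comp_apply_eq_smul {E F : V →ₗ[𝕜] V}
    (hadj : ∀ x y, ⟪E x, y⟫_𝕜 = ⟪x, F y⟫_𝕜) {w : V} {c : 𝕜} (hw : E w = 0)
    (hc : (E ∘ₗ F - F ∘ₗ E) w = c • w) :
    (‖F w‖ : 𝕜) ^ 2 = c * (‖w‖ : 𝕜) ^ 2 :=
  norm_sq_apply_of_adjoint_apply_eq_smul hadj <|
    (comp_sub_comp_apply_of_apply_eq_zero E F hw).symm.trans hc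

theorem adjoint_pairs_double_lowering_norm_sq_general {E₁ F₁ E₂ F₂ : V →ₗ[𝕜] V}
    (hadj₁ : ∀ x y, ⟪E₁ x, y⟫_𝕜 = ⟪x, F₁ y⟫_𝕜) (hadj₂ : ∀ x y, ⟪E₂ x, y⟫_𝕜 = ⟪x, F₂ y⟫_𝕜)
    {v : V} {n m : 𝕜} (hE₁ : E₁ v = 0) (hE₂ : E₂ (F₁ v) = 0)
    (hn : (E₁ ∘ₗ F₁ - F₁ ∘ₗ E₁) v = n • v)
    (hm : (E₂ ∘ₗ F₂ - F₂ ∘ₗ E₂) (F₁ v) = m • F₁ v) :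
    (‖F₂ (F₁ v)‖ : 𝕜) ^ 2 = m * n * (‖v‖ : 𝕜) ^ 2 := by
  rw [norm_sq_apply_of_comp_sub_comp_apply_eq_smul hadj₂ hE₂ hm,
    norm_sq_apply_of_comp_sub_comp_apply_eq_smul hadj₁ hE₁ hn, mul_assoc]

end AdjointPair

/-- let `(E₁, F₁)` and `(E₂, F₂)` be adjoint pairs of linear operators on `V`,
and let `v ∈ V`, `n, m ∈ ℝ` satisfy `E₁ v = 0`, `E₂ v = 0`, `E₂∘F₁ = F₁∘E₂`,
`(E₁∘F₁ − F₁∘E₁) v = n • v`, and `(E₂∘F₂ − F₂∘E₂)(F₁ v) = m • (F₁ v)`.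
Then `‖F₂(F₁ v)‖² = m·n·‖v‖²`. -/
theorem adjoint_pairs_double_lowering_norm_sq {V : Type*} [NormedAddCommGroup V]
    [InnerProductSpace ℂ V]
    (E₁ F₁ E₂ F₂ : V →ₗ[ℂ] V)
    (hadj₁ : ∀ x y : V, ⟪E₁ x, y⟫_ℂ = ⟪x, F₁ y⟫_ℂ)
    (hadj₂ : ∀ x y : V, ⟪E₂ x, y⟫_ℂ = ⟪x, F₂ y⟫_ℂ)
    (v : V) (n m : ℝ)
    (h1 : E₁ v = 0) (h2 : E₂ v = 0)
    (hcomm : E₂ ∘ₗ F₁ = F₁ ∘ₗ E₂)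
    (h3 : (E₁ ∘ₗ F₁ - F₁ ∘ₗ E₁) v = (n : ℂ) • v)
    (h4 : (E₂ ∘ₗ F₂ - F₂ ∘ₗ E₂) (F₁ v) = (m : ℂ) • (F₁ v)) :
    ‖F₂ (F₁ v)‖ ^ 2 = m * n * ‖v‖ ^ 2 := by
  have hE₂ : E₂ (F₁ v) = 0 := by
    rw [← LinearMap.comp_apply, hcomm, LinearMap.comp_apply, h2, map_zero]
  exact Complex.ofReal_injective <| by
    push_cast
    exact adjoint_pairs_double_lowering_norm_sq_general hadj₁ hadj₂ h1 hE₂ h3 h4
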